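/- Let Φ be a nonzero Bernstein function on (0,∞) with Φ(0+) = 0, Φ'(0+) = 1, Φ''(0+) > −∞, and lim_{s→∞} Φ(s)/s = 0. Then there exists a function φ : (0,∞) → ℝ that is twice continuously differentiable and strictly convex on (0,∞), with φ(1) = 0, φ'(1) = 0, φ''(1) > 0, and lim_{a→0+} φ'(a) = −∞, such that for every s > 0, Φ(s) = min_{w > 0} { w·s + φ(w) }, the minimum being attained at w = Φ'(s). -/

import Mathlib

open Set Filter Topology

/-- A Bernstein function on `(0,∞)`: smooth, nonnegative, and
`(-1)^(k-1) Φ^(k) ≥ 0` on `(0,∞)` for all `k ≥ 1`. -/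
def IsBernstein (Φ : ℝ → ℝ) : Prop :=
  ContDiffOn ℝ (⊤ : ℕ∞) Φ (Set.Ioi 0) ∧
  (∀ s ∈ Set.Ioi (0:ℝ), 0 ≤ Φ s) ∧
  (∀ k : ℕ, 1 ≤ k → ∀ s ∈ Set.Ioi (0:ℝ), 0 ≤ (-1 : ℝ) ^ (k - 1) * iteratedDeriv k Φ s)

/-- A function given with its tower of (sign-alternated) derivatives. -/
def CMTower (F : ℕ → ℝ → ℝ) : Prop :=
  ∀ n : ℕ, ∀ x : ℝ, 0 < x → 0 ≤ F n x ∧ HasDerivAt (F n) (-(F (n + 1) x)) x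

lemma CMTower.anti {F : ℕ → ℝ → ℝ} (hF : CMTower F) (n : ℕ) : AntitoneOn (F n) (Ioi 0) := by
  apply antitoneOn_of_deriv_nonpos (convex_Ioi 0)
  · intro x hx
    exact (hF n x hx).2.continuousAt.continuousWithinAt
  · intro x hx
    rw [interior_Ioi] at hx
    exact (hF n x hx).2.differentiableAt.differentiableWithinAt
  · intro x hx
    rw [interior_Ioi] at hx
    rw [(hF n x hx).2.deriv]
    linarith [(hF (n + 1) x hx).1]

lemma CMTower.diff {F : ℕ → ℝ → ℝ} (hF : CMTower F) {h : ℝ} (hh : 0 < h) :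
    CMTower (fun n x => F n x - F n (x + h)) := by
  intro n x hx
  have hxh : 0 < x + h := by linarith
  refine ⟨?_, ?_⟩
  · have := hF.anti n (mem_Ioi.2 hx) (mem_Ioi.2 hxh) (by linarith)
    simp only
    linarith
  · have h1 := (hF n x hx).2
    have h2 := (hF n (x + h) hxh).2.comp_add_const x h
    have h3 := h1.sub h2
    refine h3.congr_deriv ?_
    ring

lemma CMTower.bound (n : ℕ) : ∀ (F : ℕ → ℝ → ℝ), CMTower F → ∀ s x h : ℝ, 0 < x → 0 < h →
    s ≤ x + 2 * h → (∀ y, s ≤ y → F 0 y = 0) → n * F 0 (x + h) ≤ F 0 x := by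
  induction n with
  | zero =>
    intro F hF s x h hx hh hs hz
    simpa using (hF 0 x hx).1
  | succ n ih =>
    intro F hF s x h hx hh hs hz
    have := ih _ (hF.diff hh) s x h hx hh hs (by
      intro y hy
      rw [hz y hy, hz (y + h) (by linarith)]
      ring)
    rw [hz (x + h + h) (by linarith)] at this
    push_cast
    linarith

lemma CMTower.step {F : ℕ → ℝ → ℝ} (hF : CMTower F) {s : ℝ} (hs : 0 < s) (hz : F 0 s = 0) :
    F 0 (s * (2 / 3)) = 0 := by
  have hz' : ∀ y, s ≤ y → F 0 y = 0 := by
    intro y hy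
    have hy0 : 0 < y := by linarith
    have := hF.anti 0 (mem_Ioi.2 hs) (mem_Ioi.2 hy0) hy
    linarith [(hF 0 y hy0).1]
  have hb : ∀ n : ℕ, n * F 0 (s * (2 / 3)) ≤ F 0 (s / 3) := by
    intro n
    have := CMTower.bound n F hF s (s / 3) (s / 3) (by positivity) (by positivity)
      (by linarith) hz'
    rwa [show s / 3 + s / 3 = s * (2 / 3) by ring] at this
  have hnn := (hF 0 (s * (2 / 3)) (by positivity)).1
  by_contra hne
  have hpos : 0 < F 0 (s * (2 / 3)) := lt_of_le_of_ne hnn (Ne.symm hne)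
  obtain ⟨n, hn⟩ := exists_nat_gt (F 0 (s / 3) / F 0 (s * (2 / 3)))
  rw [div_lt_iff₀ hpos] at hn
  linarith [hb n]

lemma CMTower.zero {F : ℕ → ℝ → ℝ} (hF : CMTower F) {s : ℝ} (hs : 0 < s) (hz : F 0 s = 0)
    {x : ℝ} (hx : 0 < x) : F 0 x = 0 := by
  have hall : ∀ n : ℕ, F 0 (s * (2 / 3) ^ n) = 0 := by
    intro n
    induction n with
    | zero => simpa using hz
    | succ n ih =>
      have := hF.step (by positivity) ih
      rwa [pow_succ, ← mul_assoc]
  obtain ⟨n, hn⟩ := exists_pow_lt_of_lt_one (show 0 < x / s by positivity)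
    (show (2 / 3 : ℝ) < 1 by norm_num)
  have hlt : s * (2 / 3) ^ n ≤ x := by
    rw [lt_div_iff₀ hs] at hn
    linarith
  have := hF.anti 0 (mem_Ioi.2 (show 0 < s * (2 / 3 : ℝ) ^ n by positivity)) (mem_Ioi.2 hx) hlt
  linarith [(hF 0 x hx).1, hall n]

lemma conj_core (P G g : ℝ → ℝ) (hP : ∀ s, HasDerivAt P (G s) s) (hG : ∀ s, HasDerivAt G (g s) s)
    (hgc : Continuous g) (hg : ∀ s, g s < 0) (hpos : ∀ s, 0 < G s)
    (hsmall : ∀ w, 0 < w → ∃ s, G s < w) (hbig : ∀ w, ∃ s, w < G s)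
    (hP0 : P 0 = 0) (hG0 : G 0 = 1) :
    ∃ φ : ℝ → ℝ,
      ContDiffOn ℝ 2 φ (Set.Ioi 0) ∧
      StrictConvexOn ℝ (Set.Ioi 0) φ ∧
      φ 1 = 0 ∧ deriv φ 1 = 0 ∧ 0 < deriv (deriv φ) 1 ∧
      Filter.Tendsto (deriv φ) (𝓝[>] (0:ℝ)) Filter.atBot ∧
      ∀ s : ℝ, 
        P s = G s * s + φ (G s) ∧
        ∀ w : ℝ, 0 < w → P s ≤ w * s + φ w := by
  have hGc : Continuous G := continuous_iff_continuousAt.2 fun s => (hG s).continuousAt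
  have hanti : StrictAnti G := strictAnti_of_deriv_neg fun s => by
    rw [(hG s).deriv]; exact hg s
  have hsurj : ∀ w, 0 < w → ∃ s, G s = w := by
    intro w hw
    obtain ⟨a, ha⟩ := hsmall w hw
    obtain ⟨b, hb⟩ := hbig w
    exact mem_range_of_exists_le_of_exists_ge hGc ⟨a, ha.le⟩ ⟨b, hb.le⟩
  choose! ψ hψ using hsurj
  have hψG : ∀ s, ψ (G s) = s := fun s => hanti.injective (hψ _ (hpos s))
  have hψanti : StrictAntiOn ψ (Ioi 0) := by
    intro a ha b hb hab
    rw [← hanti.lt_iff_gt, hψ a ha, hψ b hb]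
    exact hab
  have himg : ψ '' Ioi 0 = univ := by
    ext s
    simp only [mem_univ, iff_true]
    exact ⟨G s, hpos s, hψG s⟩
  have hψc : ∀ w, 0 < w → ContinuousAt ψ w := by
    intro w hw
    have h1 : StrictMonoOn (fun x => - ψ x) (Ioi 0) := by
      intro a ha b hb hab
      exact neg_lt_neg (hψanti ha hb hab)
    have h2 : ContinuousAt (fun x => - ψ x) w := by
      apply h1.continuousAt_of_image_mem_nhds (Ioi_mem_nhds hw)
      have : (fun x => - ψ x) '' Ioi 0 = univ := by
        ext s
        simp only [mem_univ, iff_true]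
        exact ⟨G (-s), hpos _, by simp [hψG]⟩
      rw [this]
      exact univ_mem
    have h3 := h2.neg
    have h4 : (-fun x => -ψ x) = ψ := by ext x; simp
    rwa [h4] at h3
  have hψd : ∀ w, 0 < w → HasDerivAt ψ (g (ψ w))⁻¹ w := by
    intro w hw
    refine HasDerivAt.of_local_left_inverse (hψc w hw) (hG (ψ w)) (hg _).ne ?_
    filter_upwards [Ioi_mem_nhds hw] with y hy using hψ y hy
  set φ : ℝ → ℝ := fun w => P (ψ w) - w * ψ w with hφ
  have hφd : ∀ w, 0 < w → HasDerivAt φ (-ψ w) w := by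
    intro w hw
    have h1 := (hP (ψ w)).comp w (hψd w hw)
    have h2 := (hasDerivAt_id w).mul (hψd w hw)
    have h3 := h1.sub h2
    refine h3.congr_deriv ?_
    rw [hψ w hw]
    simp only [id]
    ring
  have hderiv : ∀ w, 0 < w → deriv φ w = -ψ w := fun w hw => (hφd w hw).deriv
  have hdd : ∀ w, 0 < w → HasDerivAt (deriv φ) (-(g (ψ w))⁻¹) w := by
    intro w hw
    refine (hψd w hw).neg.congr_of_eventuallyEq ?_
    filter_upwards [Ioi_mem_nhds hw] with y hy using hderiv y hy
  have hψ1 : ψ 1 = 0 := by rw [← hG0, hψG]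
  refine ⟨φ, ?_, ?_, ?_, ?_, ?_, ?_, ?_⟩
  · rw [show (2 : WithTop ℕ∞) = 1 + 1 by norm_num, contDiffOn_succ_iff_deriv_of_isOpen isOpen_Ioi]
    refine ⟨fun w hw => (hφd w hw).differentiableAt.differentiableWithinAt, by simp, ?_⟩
    rw [show (1 : WithTop ℕ∞) = 0 + 1 by norm_num, contDiffOn_succ_iff_deriv_of_isOpen isOpen_Ioi]
    refine ⟨fun w hw => (hdd w hw).differentiableAt.differentiableWithinAt, by simp, ?_⟩
    rw [contDiffOn_zero]
    have hc : ContinuousOn (fun w => -(g (ψ w))⁻¹) (Ioi 0) := by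
      intro w hw
      exact ((hgc.continuousAt.comp (hψc w hw)).inv₀ (hg _).ne).neg.continuousWithinAt
    exact hc.congr fun w hw => (hdd w hw).deriv
  · apply StrictMonoOn.strictConvexOn_of_deriv (convex_Ioi 0)
    · exact fun w hw => (hφd w hw).continuousAt.continuousWithinAt
    · rw [interior_Ioi]
      intro a ha b hb hab
      rw [hderiv a ha, hderiv b hb]
      exact neg_lt_neg (hψanti ha hb hab)
  · simp [hφ, hψ1, hP0]
  · rw [hderiv 1 one_pos, hψ1, neg_zero]
  · rw [(hdd 1 one_pos).deriv, neg_pos, inv_lt_zero]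
    exact hg _
  · rw [tendsto_atBot]
    intro b
    filter_upwards [Ioo_mem_nhdsGT (hpos (-b))] with w hw
    rw [hderiv w hw.1]
    have := hψanti hw.1 (hpos (-b)) hw.2
    rw [hψG] at this
    linarith
  · intro s
    refine ⟨by simp only [hφ, hψG]; ring, ?_⟩
    intro w hw
    obtain ⟨t, rfl⟩ : ∃ t, G t = w := ⟨ψ w, hψ w hw⟩
    simp only [hφ, hψG]
    have hPc : Continuous P := continuous_iff_continuousAt.2 fun s => (hP s).continuousAt
    have hineq : P s ≤ P t + G t * (s - t) := by
      rcases lt_trichotomy s t with h | h | h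
      · obtain ⟨x, hx, he⟩ := exists_hasDerivAt_eq_slope P G h hPc.continuousOn fun x _ => hP x
        rw [eq_div_iff (by linarith)] at he
        have := hanti hx.2
        nlinarith
      · subst h; simp
      · obtain ⟨x, hx, he⟩ := exists_hasDerivAt_eq_slope P G h hPc.continuousOn fun x _ => hP x
        rw [eq_div_iff (by linarith)] at he
        have := hanti hx.1
        nlinarith
    linarith

lemma glue_continuousAt (A : ℝ → ℝ) (p q r : ℝ)
    (h : Tendsto A (𝓝[>] (0:ℝ)) (𝓝 p)) :
    ContinuousAt (fun s => if 0 < s then A s else p + q * s + r * s ^ 2) 0 := by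
  rw [continuousAt_iff_continuous_left'_right']
  constructor
  · have h1 : ContinuousWithinAt (fun s : ℝ => p + q * s + r * s ^ 2) (Iio 0) 0 := by fun_prop
    refine h1.congr (fun y hy => ?_) ?_
    · have : ¬ (0 < y) := not_lt.2 (le_of_lt hy)
      simp [this]
    · simp
  · have : Tendsto (fun s => if 0 < s then A s else p + q * s + r * s ^ 2) (𝓝[>] (0:ℝ)) (𝓝 p) := by
      refine h.congr' ?_
      filter_upwards [self_mem_nhdsWithin] with y hy
      simp [mem_Ioi.1 hy]
    simpa [ContinuousWithinAt] using this

lemma glue_hasDerivAt (A B : ℝ → ℝ) (p q r q' r' : ℝ)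
    (h : Tendsto A (𝓝[>] (0:ℝ)) (𝓝 p)) (hB : Tendsto B (𝓝[>] (0:ℝ)) (𝓝 q))
    (hAB : ∀ s, 0 < s → HasDerivAt A (B s) s) (hq' : q' = 2 * r) (hr' : r' = 0) (s : ℝ) :
    HasDerivAt (fun s => if 0 < s then A s else p + q * s + r * s ^ 2)
      (if 0 < s then B s else q + q' * s + r' * s ^ 2) s := by
  have hne : ∀ y : ℝ, y ≠ 0 → HasDerivAt (fun s => if 0 < s then A s else p + q * s + r * s ^ 2)
      (if 0 < y then B y else q + q' * y + r' * y ^ 2) y := by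
    intro y hy
    rcases lt_or_gt_of_ne hy with hy | hy
    · rw [if_neg (not_lt.2 hy.le)]
      have h1 : HasDerivAt (fun s : ℝ => p + q * s + r * s ^ 2) (q + q' * y + r' * y ^ 2) y := by
        have := (((hasDerivAt_id y).const_mul q).const_add p).add
          (((hasDerivAt_id y).pow 2).const_mul r)
        refine this.congr_deriv ?_
        rw [hq', hr']
        simp only [id]
        norm_num
        ring
      refine h1.congr_of_eventuallyEq ?_
      filter_upwards [Iio_mem_nhds hy] with z hz
      exact if_neg (not_lt.2 (le_of_lt hz))
    · rw [if_pos hy]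
      refine (hAB y hy).congr_of_eventuallyEq ?_
      filter_upwards [Ioi_mem_nhds hy] with z hz
      exact if_pos hz
  by_cases hs : s = 0
  · subst hs
    exact hasDerivAt_of_hasDerivAt_of_ne hne (glue_continuousAt A p q r h)
      (glue_continuousAt B q q' r' hB)
  · exact hne s hs

theorem stmt_14 (Φ : ℝ → ℝ) (hB : IsBernstein Φ)
    (hnz : ∃ s, 0 < s ∧ 0 < Φ s)
    (h0 : Filter.Tendsto Φ (𝓝[>] (0:ℝ)) (𝓝 0))
    (hd1 : Filter.Tendsto (deriv Φ) (𝓝[>] (0:ℝ)) (𝓝 1))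
    (c : ℝ) (hc : Filter.Tendsto (deriv (deriv Φ)) (𝓝[>] (0:ℝ)) (𝓝 c))
    (hlin : Filter.Tendsto (fun s => Φ s / s) Filter.atTop (𝓝 0)) :
    ∃ φ : ℝ → ℝ,
      ContDiffOn ℝ 2 φ (Set.Ioi 0) ∧
      StrictConvexOn ℝ (Set.Ioi 0) φ ∧
      φ 1 = 0 ∧ deriv φ 1 = 0 ∧ 0 < deriv (deriv φ) 1 ∧
      Filter.Tendsto (deriv φ) (𝓝[>] (0:ℝ)) Filter.atBot ∧
      ∀ s : ℝ, 0 < s →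
        Φ s = deriv Φ s * s + φ (deriv Φ s) ∧
        ∀ w : ℝ, 0 < w → Φ s ≤ w * s + φ w := by
  obtain ⟨hsm, hnn, hsign⟩ := hB
  have hit : ∀ n : ℕ, ∀ s : ℝ, 0 < s →
      HasDerivAt (iteratedDeriv n Φ) (iteratedDeriv (n + 1) Φ s) s := by
    have hcd : ∀ n : ℕ, ContDiffOn ℝ (⊤ : ℕ∞) (iteratedDeriv n Φ) (Ioi 0) := by
      intro n
      induction n with
      | zero => simpa using hsm
      | succ n ih =>
        rw [iteratedDeriv_succ]
        exact ((contDiffOn_infty_iff_deriv_of_isOpen isOpen_Ioi).1 ih).2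
    intro n s hs
    have h2 : DifferentiableAt ℝ (iteratedDeriv n Φ) s :=
      ((contDiffOn_infty_iff_deriv_of_isOpen isOpen_Ioi).1 (hcd n)).1.differentiableAt
        (Ioi_mem_nhds hs)
    rw [iteratedDeriv_succ]
    exact h2.hasDerivAt
  have e1 : iteratedDeriv 1 Φ = deriv Φ := iteratedDeriv_one
  have e2 : iteratedDeriv 2 Φ = deriv (deriv Φ) := by
    rw [iteratedDeriv_succ, e1]
  have hΦ1 : ∀ s : ℝ, 0 < s → HasDerivAt Φ (deriv Φ s) s := by
    intro s hs
    have := hit 0 s hs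
    simpa [e1] using this
  have hΦ2 : ∀ s : ℝ, 0 < s → HasDerivAt (deriv Φ) (deriv (deriv Φ) s) s := by
    intro s hs
    have := hit 1 s hs
    rwa [e1, e2] at this
  have hΦ1nn : ∀ s : ℝ, 0 < s → 0 ≤ deriv Φ s := by
    intro s hs
    have := hsign 1 le_rfl s hs
    simpa [e1] using this
  -- the tower of derivatives of `-Φ''`
  have hT : CMTower (fun n s => (-1) ^ (n + 1) * iteratedDeriv (n + 2) Φ s) := by
    intro n s hs
    refine ⟨hsign (n + 2) (by omega) s hs, ?_⟩
    have := (hit (n + 2) s hs).const_mul ((-1 : ℝ) ^ (n + 1))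
    refine this.congr_deriv ?_
    rw [show n + 1 + 2 = n + 2 + 1 by ring]
    ring
  have hT0 : ∀ s, (fun (n : ℕ) s => (-1 : ℝ) ^ (n + 1) * iteratedDeriv (n + 2) Φ s) 0 s
      = - deriv (deriv Φ) s := by
    intro s
    simp [e2]
  obtain ⟨F, hT, hT0⟩ : ∃ F : ℕ → ℝ → ℝ, CMTower F ∧ ∀ s, F 0 s = - deriv (deriv Φ) s :=
    ⟨_, hT, hT0⟩
  have hle : ∀ s, 0 < s → deriv (deriv Φ) s ≤ 0 := by
    intro s hs
    have := (hT 0 s hs).1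
    rw [hT0] at this
    linarith
  have hmono : ∀ s t, 0 < s → s ≤ t → deriv (deriv Φ) s ≤ deriv (deriv Φ) t := by
    intro s t hs hst
    have := hT.anti 0 (mem_Ioi.2 hs) (mem_Ioi.2 (hs.trans_le hst)) hst
    rw [hT0, hT0] at this
    linarith
  -- the glued functions
  set P : ℝ → ℝ := fun s => if 0 < s then Φ s else 0 + 1 * s + (c / 2) * s ^ 2 with hPdef
  set G : ℝ → ℝ := fun s => if 0 < s then deriv Φ s else 1 + c * s + 0 * s ^ 2 with hGdef
  set g : ℝ → ℝ := fun s => if 0 < s then deriv (deriv Φ) s else c + 0 * s + 0 * s ^ 2 with hgdef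
  have hPG : ∀ s, HasDerivAt P (G s) s := fun s =>
    glue_hasDerivAt Φ (deriv Φ) 0 1 (c / 2) c 0 h0 hd1 hΦ1 (by ring) rfl s
  have hGg : ∀ s, HasDerivAt G (g s) s := fun s =>
    glue_hasDerivAt (deriv Φ) (deriv (deriv Φ)) 1 c 0 0 0 hd1 hc hΦ2 (by ring) rfl s
  have hPc : Continuous P := continuous_iff_continuousAt.2 fun s => (hPG s).continuousAt
  have hGc : Continuous G := continuous_iff_continuousAt.2 fun s => (hGg s).continuousAt
  have hgc : Continuous g := by
    rw [continuous_iff_continuousAt]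
    intro s
    rcases lt_trichotomy s 0 with hs | hs | hs
    · refine (continuousAt_const (y := c)).congr ?_
      filter_upwards [Iio_mem_nhds hs] with z hz
      simp [hgdef, not_lt.2 (le_of_lt (mem_Iio.1 hz))]
    · subst hs
      exact glue_continuousAt _ c 0 0 hc
    · have h3 := (hit 2 s hs).continuousAt
      rw [e2] at h3
      refine h3.congr ?_
      filter_upwards [Ioi_mem_nhds hs] with z hz
      simp [hgdef, mem_Ioi.1 hz]
  have hGpos : ∀ s, 0 < s → G s = deriv Φ s := fun s hs => if_pos hs
  have hPpos : ∀ s, 0 < s → P s = Φ s := fun s hs => if_pos hs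
  have hgpos : ∀ s, 0 < s → g s = deriv (deriv Φ) s := fun s hs => if_pos hs
  have hP0 : P 0 = 0 := by simp [hPdef]
  have hG0 : G 0 = 1 := by simp [hGdef]
  have hsmall : ∀ w, 0 < w → ∃ s, G s < w := by
    intro w hw
    by_contra! hcon
    have hev : ∀ᶠ s in atTop, Φ s / s < w := hlin.eventually (gt_mem_nhds hw)
    obtain ⟨s, hs1, hs⟩ := (hev.and (eventually_gt_atTop 0)).exists
    obtain ⟨x, hx, he⟩ := exists_hasDerivAt_eq_slope P G hs hPc.continuousOn fun x _ => hPG x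
    rw [hPpos s hs, hP0, sub_zero, sub_zero] at he
    linarith [hcon x]
  have hneg : ∀ s, 0 < s → deriv (deriv Φ) s < 0 := by
    intro s hs
    refine lt_of_le_of_ne (hle s hs) ?_
    intro hz
    have hall : ∀ x, 0 < x → g x = 0 := by
      intro x hx
      have := hT.zero hs (by rw [hT0, hz, neg_zero]) hx
      rw [hT0] at this
      rw [hgpos x hx]
      linarith
    have hc0 : c ≤ 0 := by
      refine le_of_tendsto hc ?_
      filter_upwards [self_mem_nhdsWithin] with x hx using hle x hx
    obtain ⟨y, hy⟩ := hsmall 1 one_pos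
    have hy0 : 0 < y := by
      by_contra hy0
      simp only [hGdef, if_neg hy0] at hy
      nlinarith
    obtain ⟨x, hx, he⟩ := exists_hasDerivAt_eq_slope G g hy0 hGc.continuousOn fun x _ => hGg x
    rw [hall x hx.1, eq_div_iff (by linarith), hG0] at he
    linarith
  have hcneg : c < 0 := by
    refine lt_of_le_of_lt ?_ (hneg 1 one_pos)
    refine le_of_tendsto hc ?_
    filter_upwards [Ioo_mem_nhdsGT (show (0:ℝ) < 1 from one_pos)] with x hx
    exact hmono x 1 hx.1 hx.2.le
  have hg : ∀ s, g s < 0 := by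
    intro s
    by_cases hs : 0 < s
    · rw [hgpos s hs]; exact hneg s hs
    · simp only [hgdef, if_neg hs]; linarith
  have hanti : StrictAnti G := strictAnti_of_deriv_neg fun s => by
    rw [(hGg s).deriv]; exact hg s
  have hGp : ∀ s, 0 < G s := by
    intro s
    have h1 : 0 < max s 0 + 1 := by positivity
    have h2 := hΦ1nn _ h1
    rw [← hGpos _ h1] at h2
    exact h2.trans_lt (hanti (by linarith [le_max_left s 0]))
  have hbig : ∀ w, ∃ s, w < G s := by
    intro w
    refine ⟨|w| / c, ?_⟩
    have : ¬ (0 < |w| / c) := not_lt.2 (div_nonpos_of_nonneg_of_nonpos (abs_nonneg w) hcneg.le)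
    simp only [hGdef, if_neg this]
    rw [mul_div_cancel₀ _ hcneg.ne]
    linarith [le_abs_self w]
  obtain ⟨φ, k1, k2, k3, k4, k5, k6, k7⟩ :=
    conj_core P G g hPG hGg hgc hg hGp hsmall hbig hP0 hG0
  refine ⟨φ, k1, k2, k3, k4, k5, k6, fun s hs => ?_⟩
  have := k7 s
  rwa [hGpos s hs, hPpos s hs] at this
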